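/- Let R be a finite principal ideal ring with maximal ideals m_1, …, m_s. Then an MDS code of length n and rank k over R exists if and only if there exists an MDS code of length n and dimension k over every residue field R/m_i. -/

import Mathlib

/-- The Hamming weight of a vector: the number of nonzero coordinates. -/
noncomputable def hammingWeight {R : Type*} [Zero R] {n : ℕ} (v : Fin n → R) : ℕ :=
  Nat.card {i : Fin n // v i ≠ 0}

/-- The minimum Hamming distance of a code. -/
noncomputable def minHammingDist {R : Type*} [CommRing R] {n : ℕ}
    (C : Submodule R (Fin n → R)) : ℕ :=
  sInf {d | ∃ v ∈ C, v ≠ 0 ∧ hammingWeight v = d}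

/-- A (nonzero) code `C` of length `n` over the alphabet `R` is MDS if it meets the
Singleton bound `d_H(C) = n − log_{|R|}|C| + 1`, i.e. `|C| = |R|^(n + 1 − d_H(C))`. -/
noncomputable def IsMDSCode {R : Type*} [CommRing R] {n : ℕ}
    (C : Submodule R (Fin n → R)) : Prop :=
  C ≠ ⊥ ∧ minHammingDist C ≤ n ∧ Nat.card C = Nat.card R ^ (n + 1 - minHammingDist C)

/-- The rank of a code: the minimal number of generators of `C` as a module. -/
noncomputable def codeRank {R M : Type*} [CommRing R] [AddCommGroup M] [Module R M]
    (C : Submodule R M) : ℕ :=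
  sInf {k | ∃ v : Fin k → M, Submodule.span R (Set.range v) = C}

/-!
For `1 ≤ k ≤ n`, a code is MDS of rank `k` iff its projection onto any `k` coordinates is bijective:
injectivity says that the minimum distance exceeds `n - k`, and counting turns equality in the
Singleton bound into surjectivity. Such codes are the row spaces of `k × n` matrices whose `k × k`
minors are all units. An element of `R` is a unit iff it is one modulo every maximal ideal, and by
the Chinese remainder theorem matrices over the finitely many residue fields lift simultaneously
to `R`.
-/

open Function

section Weight

variable {R : Type*} {n : ℕ}

theorem hammingWeight_eq_zero_iff [Zero R] {v : Fin n → R} : hammingWeight v = 0 ↔ v = 0 := by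
  simp [hammingWeight, Finite.card_eq_zero_iff, isEmpty_subtype, funext_iff]

theorem card_zeros_add_hammingWeight [Zero R] (v : Fin n → R) :
    Nat.card {i // v i = 0} + hammingWeight v = n := by
  classical
  rw [hammingWeight, ← Nat.card_sum, Nat.card_congr (Equiv.sumCompl fun i ↦ v i = 0), Nat.card_fin]

theorem hammingWeight_add_le_iff [Zero R] {k : ℕ} {v : Fin n → R} :
    hammingWeight v + k ≤ n ↔ ∃ f : Fin k ↪ Fin n, ∀ i, v (f i) = 0 := by
  classical
  have hzeros := card_zeros_add_hammingWeight v
  calc hammingWeight v + k ≤ n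
    _ ↔ Fintype.card (Fin k) ≤ Fintype.card {i // v i = 0} := by
      rw [Fintype.card_fin, ← Nat.card_eq_fintype_card]; lia
    _ ↔ Nonempty (Fin k ↪ {i // v i = 0}) := Embedding.nonempty_iff_card_le.symm
    _ ↔ ∃ f : Fin k ↪ Fin n, ∀ i, v (f i) = 0 :=
      ⟨fun ⟨f⟩ ↦ ⟨f.trans (Embedding.subtype _), fun i ↦ (f i).2⟩,
        fun ⟨f, hf⟩ ↦ ⟨f.codRestrict {i | v i = 0} hf⟩⟩

variable [CommRing R] {C : Submodule R (Fin n → R)}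

theorem le_minHammingDist_iff (hC : C ≠ ⊥) {d : ℕ} :
    d ≤ minHammingDist C ↔ ∀ v ∈ C, v ≠ 0 → d ≤ hammingWeight v := by
  obtain ⟨u, hu, hu0⟩ := C.ne_bot_iff.1 hC
  have hne : {d | ∃ v ∈ C, v ≠ 0 ∧ hammingWeight v = d}.Nonempty := ⟨_, u, hu, hu0, rfl⟩
  rw [minHammingDist, le_csInf_iff (OrderBot.bddBelow _) hne]
  constructor
  · exact fun h v hv hv0 ↦ h _ ⟨v, hv, hv0, rfl⟩
  · rintro h _ ⟨v, hv, hv0, rfl⟩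
    exact h v hv hv0

theorem minHammingDist_pos (hC : C ≠ ⊥) : 0 < minHammingDist C :=
  (le_minHammingDist_iff hC).2 fun _ _ hv0 ↦
    Nat.pos_of_ne_zero fun h ↦ hv0 (hammingWeight_eq_zero_iff.1 h)

theorem lt_minHammingDist_add_iff (hC : C ≠ ⊥) {k : ℕ} :
    n < minHammingDist C + k ↔
      ∀ f : Fin k ↪ Fin n, Injective ((LinearMap.funLeft R R f).domRestrict C) := by
  calc n < minHammingDist C + k
    _ ↔ n + 1 - k ≤ minHammingDist C := by lia
    _ ↔ ∀ v ∈ C, v ≠ 0 → ¬ hammingWeight v + k ≤ n := by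
      rw [le_minHammingDist_iff hC]
      exact forall₃_congr fun v _ _ ↦ by lia
    _ ↔ ∀ f : Fin k ↪ Fin n, ∀ v ∈ C, (∀ i, v (f i) = 0) → v = 0 := by
      simp only [hammingWeight_add_le_iff]
      exact ⟨fun h f v hv hvf ↦ by_contra fun hv0 ↦ h v hv hv0 ⟨f, hvf⟩,
        fun h v hv hv0 ⟨f, hvf⟩ ↦ hv0 (h f v hv hvf)⟩
    _ ↔ ∀ f : Fin k ↪ Fin n, Injective ((LinearMap.funLeft R R f).domRestrict C) := by
      simp [injective_iff_map_eq_zero, funext_iff, LinearMap.funLeft_apply]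

theorem singleton_bound [Finite R] (hC : C ≠ ⊥) :
    Nat.card C ≤ Nat.card R ^ (n + 1 - minHammingDist C) := by
  have hd := minHammingDist_pos hC
  let f : Fin (n + 1 - minHammingDist C) ↪ Fin n := Fin.castLEEmb (by lia)
  simpa [Nat.card_fun] using
    Nat.card_le_card_of_injective _ ((lt_minHammingDist_add_iff hC).1 (by lia) f)

end Weight

theorem codeRank_eq_finrank {R M : Type*} [CommRing R] [Nontrivial R] [AddCommGroup M] [Module R M]
    (C : Submodule R M) [Module.Free R C] [Module.Finite R C] :
    codeRank C = Module.finrank R C := by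
  refine IsLeast.csInf_eq ⟨⟨fun i ↦ Module.finBasis R C i, ?_⟩, ?_⟩
  · rw [Set.range_comp' Subtype.val, ← C.coe_subtype, Submodule.span_image,
      Module.Basis.span_eq, Submodule.map_subtype_top]
  · rintro k ⟨v, rfl⟩
    simpa [Set.finrank] using finrank_range_le_card (R := R) v

section InformationSet

variable {R κ ι : Type*} [CommRing R]

/-- The coordinates `f` form an information set of the code `C`: a codeword can be prescribed
arbitrarily on them and is then determined. The coordinates are listed by a map `f`
rather than given as a subset of `ι`, so that the projection has values in `κ → R`. -/
def IsInformationSet (C : Submodule R (ι → R)) (f : κ → ι) : Prop :=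
  Bijective ((LinearMap.funLeft R R f).domRestrict C)

namespace IsInformationSet

variable {C : Submodule R (ι → R)} {f : κ → ι}

/-- The linear equivalence reading off a codeword on an information set; its inverse is the
systematic encoder. -/
noncomputable def linearEquiv (hf : IsInformationSet C f) : C ≃ₗ[R] (κ → R) :=
  LinearEquiv.ofBijective _ hf

variable [Fintype κ]

theorem card_eq_pow (hf : IsInformationSet C f) : Nat.card C = Nat.card R ^ Fintype.card κ := by
  rw [Nat.card_congr hf.linearEquiv.toEquiv, Nat.card_fun,
    Nat.card_eq_fintype_card (α := κ)]

theorem codeRank_eq [Nontrivial R] (hf : IsInformationSet C f) :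
    codeRank C = Fintype.card κ := by
  have := Module.Free.of_equiv hf.linearEquiv.symm
  have := Module.Finite.equiv hf.linearEquiv.symm
  rw [codeRank_eq_finrank, hf.linearEquiv.finrank_eq, Module.finrank_fintype_fun_eq_card]

theorem exists_range_vecMulLinear_eq (hf : IsInformationSet C f) :
    ∃ G : Matrix κ ι R, Injective G.vecMulLinear ∧ LinearMap.range G.vecMulLinear = C := by
  classical
  let encode : (κ → R) →ₗ[R] ι → R := C.subtype ∘ₗ hf.linearEquiv.symm
  have hencode : encode.toMatrixRight'.vecMulLinear = encode :=
    LinearMap.toMatrixRight'.symm_apply_apply encode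
  refine ⟨encode.toMatrixRight', ?_, ?_⟩ <;> rw [hencode]
  · exact C.injective_subtype.comp hf.linearEquiv.symm.injective
  · rw [LinearEquiv.range_comp, C.range_subtype]

end IsInformationSet

theorem isInformationSet_range_vecMulLinear_iff [Fintype κ] [DecidableEq κ] {G : Matrix κ ι R}
    (hG : Injective G.vecMulLinear) (f : κ → ι) :
    IsInformationSet (LinearMap.range G.vecMulLinear) f ↔ IsUnit (G.submatrix id f).det := by
  have hcomp : (LinearMap.funLeft R R f).domRestrict (LinearMap.range G.vecMulLinear) ∘
      LinearEquiv.ofInjective G.vecMulLinear hG = (G.submatrix id f).vecMul := rfl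
  rw [IsInformationSet, ← EquivLike.bijective_comp (LinearEquiv.ofInjective _ hG), hcomp,
    ← Matrix.isUnit_iff_isUnit_det]
  exact ⟨fun h ↦ Matrix.vecMul_surjective_iff_isUnit.1 h.2,
    fun h ↦ ⟨Matrix.vecMul_injective_of_isUnit h, Matrix.vecMul_surjective_iff_isUnit.2 h⟩⟩

end InformationSet

section MDSCode

variable {R : Type*} [CommRing R] [Finite R] {n k : ℕ} {C : Submodule R (Fin n → R)}

theorem IsMDSCode.isInformationSet (hC : IsMDSCode C)
    (f : Fin (n + 1 - minHammingDist C) ↪ Fin n) : IsInformationSet C f := by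
  obtain ⟨hC0, -, hcard⟩ := hC
  have hinj := (lt_minHammingDist_add_iff hC0).1 (by lia) f
  refine hinj.bijective_of_nat_card_le ?_
  rw [hcard, Nat.card_fun, Nat.card_fin]

variable [Nontrivial R]

theorem isMDSCode_of_forall_isInformationSet (hk : 1 ≤ k) (hkn : k ≤ n)
    (h : ∀ f : Fin k ↪ Fin n, IsInformationSet C f) : IsMDSCode C := by
  have hcard : Nat.card C = Nat.card R ^ k := by
    simpa using (h (Fin.castLEEmb hkn)).card_eq_pow
  have hC0 : C ≠ ⊥ := by
    rintro rfl
    exact (Nat.one_lt_pow (n := k) (by lia) (Finite.one_lt_card (α := R))).ne (by simpa using hcard)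
  have hlower : n < minHammingDist C + k :=
    (lt_minHammingDist_add_iff hC0).2 fun f ↦ (h f).injective
  have hupper : k ≤ n + 1 - minHammingDist C :=
    (Nat.pow_le_pow_iff_right Finite.one_lt_card).1 (hcard ▸ singleton_bound hC0)
  refine ⟨hC0, by lia, ?_⟩
  rw [hcard]
  congr 1
  lia

theorem isMDSCode_and_codeRank_eq_iff :
    IsMDSCode C ∧ codeRank C = k ↔
      1 ≤ k ∧ k ≤ n ∧ ∀ f : Fin k ↪ Fin n, IsInformationSet C f := by
  constructor
  · rintro ⟨hC, rfl⟩
    have hdpos := minHammingDist_pos hC.1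
    have hdle := hC.2.1
    have hrank : codeRank C = n + 1 - minHammingDist C := by
      simpa using (hC.isInformationSet (Fin.castLEEmb (by lia))).codeRank_eq
    rw [hrank]
    exact ⟨by lia, by lia, hC.isInformationSet⟩
  · rintro ⟨hk, hkn, h⟩
    exact ⟨isMDSCode_of_forall_isInformationSet hk hkn h,
      by simpa using (h (Fin.castLEEmb hkn)).codeRank_eq⟩

end MDSCode

section UnitMaximalMinors

variable {R κ ι : Type*} [CommRing R] [Fintype κ] [DecidableEq κ]

/-- All maximal minors of a matrix with rows `κ` and columns `ι` are units; over a field, this says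
that any `|κ|` columns are linearly independent, as for a generator matrix of an MDS code.
Vacuous if there are fewer columns than rows. -/
def HasUnitMaximalMinors (G : Matrix κ ι R) : Prop :=
  ∀ f : κ ↪ ι, IsUnit (G.submatrix id f).det

theorem exists_forall_isInformationSet_iff [Nonempty (κ ↪ ι)] :
    (∃ C : Submodule R (ι → R), ∀ f : κ ↪ ι, IsInformationSet C f) ↔
      ∃ G : Matrix κ ι R, HasUnitMaximalMinors G := by
  obtain ⟨f₀⟩ := ‹Nonempty (κ ↪ ι)›
  constructor
  · rintro ⟨C, hC⟩
    obtain ⟨G, hG, rfl⟩ := (hC f₀).exists_range_vecMulLinear_eq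
    exact ⟨G, fun f ↦ (isInformationSet_range_vecMulLinear_iff hG f).1 (hC f)⟩
  · rintro ⟨G, hG⟩
    have hinj : Injective G.vecMulLinear := by
      have hf₀ := (Matrix.isUnit_iff_isUnit_det _).2 (hG f₀)
      refine Injective.of_comp (f := LinearMap.funLeft R R f₀) ?_
      exact Matrix.vecMul_injective_of_isUnit hf₀
    exact ⟨_, fun f ↦ (isInformationSet_range_vecMulLinear_iff hinj f).2 (hG f)⟩

theorem isUnit_iff_forall_isMaximal_isUnit_mk {a : R} :
    IsUnit a ↔ ∀ m : Ideal R, m.IsMaximal → IsUnit (Ideal.Quotient.mk m a) := by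
  refine ⟨fun ha m _ ↦ ha.map _, fun h ↦ ?_⟩
  by_contra ha
  obtain ⟨m, hm, ham⟩ := exists_max_ideal_of_mem_nonunits ha
  exact (h m hm).ne_zero (Ideal.Quotient.eq_zero_iff_mem.2 ham)

theorem hasUnitMaximalMinors_iff_forall_isMaximal {G : Matrix κ ι R} :
    HasUnitMaximalMinors G ↔
      ∀ m : Ideal R, m.IsMaximal → HasUnitMaximalMinors (G.map (Ideal.Quotient.mk m)) := by
  have hminor (m : Ideal R) (f : κ ↪ ι) : ((G.map (Ideal.Quotient.mk m)).submatrix id f).det =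
      Ideal.Quotient.mk m (G.submatrix id f).det := by
    rw [RingHom.map_det, RingHom.mapMatrix_apply, Matrix.submatrix_map]
  simp only [HasUnitMaximalMinors, hminor, isUnit_iff_forall_isMaximal_isUnit_mk (R := R)]
  exact ⟨fun h m hm f ↦ h f m hm, fun h f m hm ↦ h m hm f⟩

end UnitMaximalMinors

theorem exists_matrix_map_quotient_mk_eq {R σ κ ι : Type*} [CommRing R] [Finite σ]
    {I : σ → Ideal R} (hI : Pairwise (IsCoprime on I)) (G : ∀ s, Matrix κ ι (R ⧸ I s)) :
    ∃ A : Matrix κ ι R, ∀ s, A.map (Ideal.Quotient.mk (I s)) = G s := by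
  choose A hA using fun i j ↦ Ideal.pi_quotient_surjective hI fun s ↦ G s i j
  exact ⟨A, fun s ↦ Matrix.ext fun i j ↦ hA i j s⟩

theorem exists_hasUnitMaximalMinors_iff_forall_isMaximal {R κ ι : Type*} [CommRing R]
    [Finite (MaximalSpectrum R)] [Fintype κ] [DecidableEq κ] :
    (∃ G : Matrix κ ι R, HasUnitMaximalMinors G) ↔
      ∀ m : Ideal R, m.IsMaximal → ∃ G : Matrix κ ι (R ⧸ m), HasUnitMaximalMinors G := by
  constructor
  · rintro ⟨G, hG⟩ m hm
    exact ⟨_, hasUnitMaximalMinors_iff_forall_isMaximal.1 hG m hm⟩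
  · intro h
    choose G hG using fun m : MaximalSpectrum R ↦ h m.asIdeal m.isMaximal
    have hcoprime : Pairwise (IsCoprime on (MaximalSpectrum.asIdeal (R := R))) := fun m m' hne ↦
      have := m.isMaximal
      have := m'.isMaximal
      Ideal.isCoprime_of_isMaximal (hne ∘ MaximalSpectrum.ext)
    obtain ⟨A, hA⟩ := exists_matrix_map_quotient_mk_eq hcoprime G
    exact ⟨A, hasUnitMaximalMinors_iff_forall_isMaximal.2 fun m hm ↦ hA ⟨m, hm⟩ ▸ hG ⟨m, hm⟩⟩

theorem exists_isMDSCode_iff_exists_hasUnitMaximalMinors (R : Type*) [CommRing R] [Finite R]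
    [Nontrivial R] (n k : ℕ) :
    (∃ C : Submodule R (Fin n → R), IsMDSCode C ∧ codeRank C = k) ↔
      1 ≤ k ∧ k ≤ n ∧ ∃ G : Matrix (Fin k) (Fin n) R, HasUnitMaximalMinors G := by
  simp only [isMDSCode_and_codeRank_eq_iff, exists_and_left]
  refine and_congr_right fun _ ↦ and_congr_right fun hkn ↦ ?_
  have : Nonempty (Fin k ↪ Fin n) := ⟨Fin.castLEEmb hkn⟩
  exact exists_forall_isInformationSet_iff

theorem exists_mds_code_over_PIR_iff_general (R : Type*) [CommRing R] [Finite R] [Nontrivial R]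
    (n k : ℕ) :
    (∃ C : Submodule R (Fin n → R), IsMDSCode C ∧ codeRank C = k) ↔
      ∀ m : Ideal R, m.IsMaximal →
        ∃ D : Submodule (R ⧸ m) (Fin n → R ⧸ m), IsMDSCode D ∧ codeRank D = k := by
  have hresidue (m : Ideal R) (hm : m.IsMaximal) :=
    have := Ideal.Quotient.nontrivial_iff.2 hm.ne_top
    have : Finite (R ⧸ m) := Finite.of_surjective _ Ideal.Quotient.mk_surjective
    exists_isMDSCode_iff_exists_hasUnitMaximalMinors (R ⧸ m) n k
  obtain ⟨m₀, hm₀⟩ := Ideal.exists_maximal R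
  rw [exists_isMDSCode_iff_exists_hasUnitMaximalMinors,
    exists_hasUnitMaximalMinors_iff_forall_isMaximal, forall₂_congr hresidue]
  constructor
  · rintro ⟨hk, hkn, hG⟩ m hm
    exact ⟨hk, hkn, hG m hm⟩
  · intro h
    obtain ⟨hk, hkn, -⟩ := h m₀ hm₀
    exact ⟨hk, hkn, fun m hm ↦ (h m hm).2.2⟩

/-- Let `R` be a finite principal ideal ring with maximal ideals `m_1, …, m_s`.  An MDS code
of length `n` and rank `k` over `R` exists if and only if an MDS code of length `n` and
dimension `k` exists over every residue field `R/m_i`. -/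
theorem exists_mds_code_over_PIR_iff (R : Type*) [CommRing R] [Finite R] [Nontrivial R]
    [IsPrincipalIdealRing R] (n k : ℕ) :
    (∃ C : Submodule R (Fin n → R), IsMDSCode C ∧ codeRank C = k) ↔
      ∀ m : Ideal R, m.IsMaximal →
        ∃ D : Submodule (R ⧸ m) (Fin n → R ⧸ m), IsMDSCode D ∧ codeRank D = k :=
  exists_mds_code_over_PIR_iff_general R n k
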